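/- Let l > −1, let φ : ℝ → [0,∞] be measurable, let x ∈ ℝ³ with |x| = r > 0, and let u ∈ ℝ. Then, as an identity in [0,∞], ∫_{ℝ³} ((x·v)/r)² φ(½|v|² + u) |x × v|^{2l} dv = 2^{l+5/2} π c_{l,1/2} r^{2l} ∫_u^∞ φ(E)(E − u)^{l+3/2} dE, where c_{l,1/2} = ∫₀¹ s^l (1−s)^{1/2} ds. -/

import Mathlib

open MeasureTheory Real Set
open scoped ENNReal

/-- The cross product of two vectors in `ℝ³`. -/
noncomputable def cross3 (x v : Fin 3 → ℝ) : Fin 3 → ℝ :=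
  ![x 1 * v 2 - x 2 * v 1, x 2 * v 0 - x 0 * v 2, x 0 * v 1 - x 1 * v 0]

/-- The Euclidean norm on `ℝ³`. -/
noncomputable def norm3 (w : Fin 3 → ℝ) : ℝ :=
  Real.sqrt (w 0 ^ 2 + w 1 ^ 2 + w 2 ^ 2)

/-- The Euclidean scalar product on `ℝ³`. -/
noncomputable def dot3 (x v : Fin 3 → ℝ) : ℝ :=
  x 0 * v 0 + x 1 * v 1 + x 2 * v 2

/-!
Split the velocity `v` into its component along `x` and its component orthogonal to `x`, and let `s`
and `t` be their squared lengths. Then `|v|² = s + t`, `(x·v)² = r² s` and `|x × v|² = r² t`, so the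
integrand is `r^{2l} φ((s + t)/2 + u) s t^l`. The orthogonal decomposition preserves volume, and on
an `n`-dimensional space the squared norm carries volume to a multiple of `t^{n/2 - 1} dt`. This
gives a double integral of `φ((s + t)/2 + u) s^{1/2} t^l`, which Liouville's extension of
Dirichlet's integral collapses to a beta integral times a single integral in `τ = s + t`; finally
`E = τ/2 + u`.
-/

open Module Metric
open scoped RealInnerProductSpace

theorem setLIntegral_comp_mul_add {a : ℝ} (ha : a ≠ 0) (b : ℝ) {s : Set ℝ} (hs : MeasurableSet s)
    (f : ℝ → ℝ≥0∞) :
    ∫⁻ y in s, f y = ENNReal.ofReal |a| * ∫⁻ x in (fun x ↦ a * x + b) ⁻¹' s, f (a * x + b) := by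
  have hsurj : Function.Surjective fun x ↦ a * x + b := fun y ↦ ⟨(y - b) / a, by field_simp; ring⟩
  have hinj : Function.Injective fun x ↦ a * x + b := fun x y h ↦ by simpa [ha] using h
  have hderiv (x : ℝ) : HasDerivAt (fun x ↦ a * x + b) a x := by
    simpa using ((hasDerivAt_id x).const_mul a).add_const b
  rw [← lintegral_const_mul' _ _ ENNReal.ofReal_ne_top,
    ← lintegral_image_eq_lintegral_abs_deriv_mul (hs.preimage (by fun_prop))
      (fun x _ ↦ (hderiv x).hasDerivWithinAt) hinj.injOn, image_preimage_eq _ hsurj]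

theorem lintegral_Ioi_comp_sq (f : ℝ → ℝ≥0∞) :
    ∫⁻ t in Ioi (0 : ℝ), f t = ∫⁻ ρ in Ioi (0 : ℝ), ENNReal.ofReal (2 * ρ) * f (ρ ^ 2) := by
  have himage : (fun ρ : ℝ ↦ ρ ^ 2) '' Ioi 0 = Ioi 0 := by
    ext t
    exact ⟨fun ⟨ρ, hρ, h⟩ ↦ h ▸ pow_pos (mem_Ioi.1 hρ) 2,
      fun ht ↦ ⟨√t, sqrt_pos.2 ht, sq_sqrt (le_of_lt ht)⟩⟩
  have hmono : MonotoneOn (fun ρ : ℝ ↦ ρ ^ 2) (Ioi 0) :=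
    fun ρ hρ _ _ h ↦ pow_le_pow_left₀ (le_of_lt hρ) h 2
  conv_lhs => rw [← himage]
  exact lintegral_image_eq_lintegral_deriv_mul_of_monotoneOn measurableSet_Ioi
    (fun ρ _ ↦ by simpa using (hasDerivAt_pow 2 ρ).hasDerivWithinAt) hmono f

theorem lintegral_Ioi_lintegral_Ioi_comp_add {F : ℝ → ℝ → ℝ≥0∞}
    (hF : Measurable (Function.uncurry F)) :
    ∫⁻ s in Ioi (0 : ℝ), ∫⁻ t in Ioi (0 : ℝ), F s (s + t) =
      ∫⁻ τ in Ioi (0 : ℝ), ∫⁻ s in Ioo 0 τ, F s τ := by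
  set A : Set (ℝ × ℝ) := {p | 0 < p.1 ∧ p.1 < p.2}
  have hA : MeasurableSet A :=
    (measurableSet_lt measurable_const measurable_fst).inter
      (measurableSet_lt measurable_fst measurable_snd)
  have htranslate (s : ℝ) :
      ∫⁻ t in Ioi (0 : ℝ), F s (s + t) = ∫⁻ τ in Ioi s, F s τ := by
    simpa [add_comm] using
      (setLIntegral_comp_mul_add one_ne_zero s (measurableSet_Ioi (a := s)) (F s)).symm
  calc ∫⁻ s in Ioi (0 : ℝ), ∫⁻ t in Ioi (0 : ℝ), F s (s + t)
    _ = ∫⁻ s, ∫⁻ τ, A.indicator (Function.uncurry F) (s, τ) := by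
      simp_rw [htranslate]
      rw [← lintegral_indicator measurableSet_Ioi]
      congr! 2 with s
      simp_rw [indicator_apply, ← lintegral_indicator measurableSet_Ioi]
      by_cases hs : 0 < s <;> simp [A, hs, indicator_apply, Function.uncurry]
    _ = ∫⁻ τ, ∫⁻ s, A.indicator (Function.uncurry F) (s, τ) :=
      lintegral_lintegral_swap (hF.indicator hA).aemeasurable
    _ = ∫⁻ τ in Ioi (0 : ℝ), ∫⁻ s in Ioo 0 τ, F s τ := by
      rw [← lintegral_indicator measurableSet_Ioi]
      congr! 2 with τ
      simp_rw [indicator_apply, ← lintegral_indicator measurableSet_Ioo]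
      by_cases hτ : 0 < τ
      · simp [A, hτ, indicator_apply, Function.uncurry]
      · have hempty (s : ℝ) : ¬(0 < s ∧ s < τ) := fun h ↦ hτ (h.1.trans h.2)
        simp [A, hτ, hempty]

/-- The constant `c_{p,q} = ∫₀¹ s ^ p (1 - s) ^ q ds`, that is `B(p + 1, q + 1)`, with value `∞`
where the integral diverges. -/
noncomputable def lbeta (p q : ℝ) : ℝ≥0∞ :=
  ∫⁻ s in Ioo (0 : ℝ) 1, ENNReal.ofReal (s ^ p * (1 - s) ^ q)

theorem lbeta_comm (p q : ℝ) : lbeta p q = lbeta q p := by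
  have hpreimage : (fun s : ℝ ↦ -1 * s + 1) ⁻¹' Ioo 0 1 = Ioo 0 1 := by
    ext s
    simp [and_comm]
  rw [lbeta, setLIntegral_comp_mul_add (neg_ne_zero.2 one_ne_zero) 1 measurableSet_Ioo, hpreimage]
  simp [lbeta, mul_comm, neg_add_eq_sub]

theorem lbeta_ne_top {p q : ℝ} (hp : -1 < p) (hq : -1 < q) : lbeta p q ≠ ∞ := by
  have hp' : 0 < p + 1 := by linarith
  have hq' : 0 < q + 1 := by linarith
  have hB := ProbabilityTheory.beta_pos hp' hq'
  have h := ProbabilityTheory.lintegral_betaPDF_eq_one hp' hq'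
  simp_rw [ProbabilityTheory.lintegral_betaPDF, add_sub_cancel_right, mul_assoc,
    ENNReal.ofReal_mul (one_div_pos.2 hB).le] at h
  rw [lintegral_const_mul' _ _ ENNReal.ofReal_ne_top] at h
  intro htop
  rw [lbeta] at htop
  rw [htop, ENNReal.mul_top (by simpa using hB)] at h
  exact ENNReal.top_ne_one h

theorem lbeta_eq_ofReal_integral {p q : ℝ} (hp : -1 < p) (hq : -1 < q) :
    lbeta p q = ENNReal.ofReal (∫ s in (0 : ℝ)..1, s ^ p * (1 - s) ^ q) := by
  have hnonneg : 0 ≤ᵐ[volume.restrict (Ioo (0 : ℝ) 1)] fun s ↦ s ^ p * (1 - s) ^ q :=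
    ae_restrict_of_forall_mem measurableSet_Ioo fun s ⟨h0, h1⟩ ↦
      mul_nonneg (rpow_nonneg h0.le _) (rpow_nonneg (sub_nonneg.2 h1.le) _)
  rw [intervalIntegral.integral_of_le zero_le_one, integral_Ioc_eq_integral_Ioo,
    integral_eq_lintegral_of_nonneg_ae hnonneg
      (Measurable.aestronglyMeasurable (by fun_prop)), ← lbeta,
    ENNReal.ofReal_toReal (lbeta_ne_top hp hq)]

theorem lintegral_Ioo_rpow_mul_sub_rpow (p q : ℝ) {τ : ℝ} (hτ : 0 < τ) :
    ∫⁻ s in Ioo 0 τ, ENNReal.ofReal (s ^ p * (τ - s) ^ q) =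
      lbeta p q * ENNReal.ofReal (τ ^ (p + q + 1)) := by
  have hpreimage : (fun s : ℝ ↦ τ * s + 0) ⁻¹' Ioo 0 τ = Ioo 0 1 := by
    ext s
    simp [hτ, hτ.ne']
  rw [setLIntegral_comp_mul_add hτ.ne' 0 measurableSet_Ioo, hpreimage, abs_of_pos hτ, lbeta,
    ← lintegral_const_mul' _ _ ENNReal.ofReal_ne_top,
    ← lintegral_mul_const' _ _ ENNReal.ofReal_ne_top]
  refine setLIntegral_congr_fun measurableSet_Ioo fun s ⟨h0, h1⟩ ↦ ?_
  have h1' : 0 ≤ 1 - s := sub_nonneg.2 h1.le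
  rw [← ENNReal.ofReal_mul hτ.le, ← ENNReal.ofReal_mul (by positivity), add_zero,
    show τ - τ * s = τ * (1 - s) by ring, mul_rpow hτ.le h0.le, mul_rpow hτ.le h1',
    rpow_add_one hτ.ne', rpow_add hτ]
  ring_nf

theorem lintegral_Ioi_lintegral_Ioi_comp_add_mul_rpow {g : ℝ → ℝ≥0∞} (hg : Measurable g)
    (p q : ℝ) :
    ∫⁻ s in Ioi (0 : ℝ), ∫⁻ t in Ioi (0 : ℝ), g (s + t) * ENNReal.ofReal (s ^ p * t ^ q) =
      lbeta p q * ∫⁻ τ in Ioi (0 : ℝ), g τ * ENNReal.ofReal (τ ^ (p + q + 1)) := by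
  calc _ = ∫⁻ τ in Ioi (0 : ℝ), ∫⁻ s in Ioo 0 τ, g τ * ENNReal.ofReal (s ^ p * (τ - s) ^ q) := by
        rw [← lintegral_Ioi_lintegral_Ioi_comp_add (by fun_prop)]
        simp_rw [add_sub_cancel_left]
    _ = ∫⁻ τ in Ioi (0 : ℝ), lbeta p q * (g τ * ENNReal.ofReal (τ ^ (p + q + 1))) := by
        refine setLIntegral_congr_fun measurableSet_Ioi fun τ hτ ↦ ?_
        rw [lintegral_const_mul _ (by fun_prop), lintegral_Ioo_rpow_mul_sub_rpow p q hτ,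
          mul_left_comm]
    _ = _ := lintegral_const_mul _ (by fun_prop)

theorem lintegral_fun_norm_addHaar {E : Type*} [NormedAddCommGroup E] [NormedSpace ℝ E]
    [Nontrivial E] [FiniteDimensional ℝ E] [MeasurableSpace E] [BorelSpace E] (μ : Measure E)
    [μ.IsAddHaarMeasure] {f : ℝ → ℝ≥0∞} (hf : Measurable f) :
    ∫⁻ x, f ‖x‖ ∂μ = finrank ℝ E * μ (ball 0 1) *
      ∫⁻ ρ in Ioi (0 : ℝ), ENNReal.ofReal (ρ ^ (finrank ℝ E - 1)) * f ρ := by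
  calc ∫⁻ x, f ‖x‖ ∂μ = ∫⁻ x : ({0}ᶜ : Set E), f ‖x.1‖ ∂(μ.comap (↑)) := by
        rw [lintegral_subtype_comap (measurableSet_singleton _).compl fun x ↦ f ‖x‖,
          restrict_compl_singleton]
    _ = ∫⁻ p, f p.2 ∂μ.toSphere.prod (.volumeIoiPow (finrank ℝ E - 1)) := by
        simpa using μ.measurePreserving_homeomorphUnitSphereProd.lintegral_comp_emb
          (Homeomorph.measurableEmbedding _) fun p ↦ f p.2
    _ = finrank ℝ E * μ (ball 0 1) * ∫⁻ ρ, f ρ.1 ∂.volumeIoiPow (finrank ℝ E - 1) := by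
        rw [lintegral_prod _ (by fun_prop)]
        simp [mul_comm]
    _ = _ := by
        rw [Measure.volumeIoiPow, lintegral_withDensity_eq_lintegral_mul _ (by fun_prop)
          (by fun_prop)]
        congr 1
        exact lintegral_subtype_comap measurableSet_Ioi
          fun ρ ↦ ENNReal.ofReal (ρ ^ (finrank ℝ E - 1)) * f ρ

/-- Half the surface area of the unit sphere in `ℝⁿ`: the constant of integration in polar
coordinates when `t = ‖x‖²` replaces the radius. For `n = 0` it is `0`, since `Gamma 0 = 0`. -/
noncomputable def halfSphereArea (n : ℕ) : ℝ :=
  π ^ (n / 2 : ℝ) / Gamma (n / 2)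

theorem halfSphereArea_one : halfSphereArea 1 = 1 := by
  rw [halfSphereArea, Nat.cast_one, Gamma_one_half_eq, sqrt_eq_rpow, div_self (by positivity)]

theorem halfSphereArea_two : halfSphereArea 2 = π := by
  simp [halfSphereArea]

section InnerProductSpace

variable {E : Type*} [NormedAddCommGroup E] [InnerProductSpace ℝ E] [FiniteDimensional ℝ E]
  [MeasurableSpace E] [BorelSpace E]

theorem finrank_mul_volume_ball [Nontrivial E] :
    finrank ℝ E * volume (ball (0 : E) 1) = ENNReal.ofReal (2 * halfSphereArea (finrank ℝ E)) := by
  have hn : (0 : ℝ) < finrank ℝ E := by exact_mod_cast finrank_pos (R := ℝ) (M := E)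
  rw [InnerProductSpace.volume_ball, ENNReal.ofReal_one, one_pow, one_mul,
    ← ENNReal.ofReal_natCast, ← ENNReal.ofReal_mul hn.le, halfSphereArea,
    Gamma_add_one (by positivity), sqrt_eq_rpow, ← rpow_mul_natCast pi_nonneg]
  congr 1
  field_simp

theorem lintegral_comp_norm_sq [Nontrivial E] {f : ℝ → ℝ≥0∞} (hf : Measurable f) :
    ∫⁻ x : E, f (‖x‖ ^ 2) = ENNReal.ofReal (halfSphereArea (finrank ℝ E)) *
      ∫⁻ t in Ioi (0 : ℝ), ENNReal.ofReal (t ^ (finrank ℝ E / 2 - 1 : ℝ)) * f t := by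
  have hn : 1 ≤ finrank ℝ E := finrank_pos
  rw [lintegral_fun_norm_addHaar volume (f := fun ρ ↦ f (ρ ^ 2)) (by fun_prop),
    finrank_mul_volume_ball, lintegral_Ioi_comp_sq fun t ↦ _ * f t, mul_comm 2,
    ENNReal.ofReal_mul' zero_le_two, mul_assoc,
    ← lintegral_const_mul' _ _ ENNReal.ofReal_ne_top]
  congr 1
  refine setLIntegral_congr_fun measurableSet_Ioi fun ρ (hρ : 0 < ρ) ↦ ?_
  have hpow : ρ * (ρ ^ 2) ^ (finrank ℝ E / 2 - 1 : ℝ) = ρ ^ (finrank ℝ E - 1) := by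
    rw [← rpow_natCast, ← rpow_natCast, ← rpow_mul hρ.le, mul_comm, ← rpow_add_one hρ.ne',
      Nat.cast_sub hn]
    push_cast
    ring_nf
  rw [← hpow, ← mul_assoc, ← mul_assoc, ← ENNReal.ofReal_mul zero_le_two,
    ← ENNReal.ofReal_mul (by positivity), mul_assoc]

theorem lintegral_comp_orthogonalProjectionOnto (K : Submodule ℝ E) {F : K → Kᗮ → ℝ≥0∞}
    (hF : Measurable (Function.uncurry F)) :
    ∫⁻ y, F (K.orthogonalProjectionOnto y) (Kᗮ.orthogonalProjectionOnto y) =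
      ∫⁻ a, ∫⁻ b, F a b := by
  have hpreserving := (WithLp.volume_preserving_ofLp K Kᗮ).comp
    K.orthogonalDecomposition.measurePreserving
  calc _ = ∫⁻ y, Function.uncurry F (K.orthogonalDecomposition y).ofLp := by simp
    _ = ∫⁻ p, Function.uncurry F p := hpreserving.lintegral_comp hF
    _ = _ := lintegral_prod _ hF.aemeasurable

theorem lintegral_comp_norm_sq_orthogonalProjectionOnto (K : Submodule ℝ E) [Nontrivial K]
    [Nontrivial Kᗮ] {G : ℝ → ℝ → ℝ≥0∞} (hG : Measurable (Function.uncurry G)) :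
    ∫⁻ y, G (‖K.orthogonalProjectionOnto y‖ ^ 2) (‖Kᗮ.orthogonalProjectionOnto y‖ ^ 2) =
      ENNReal.ofReal (halfSphereArea (finrank ℝ K)) *
        ENNReal.ofReal (halfSphereArea (finrank ℝ Kᗮ)) *
        ∫⁻ s in Ioi (0 : ℝ), ENNReal.ofReal (s ^ (finrank ℝ K / 2 - 1 : ℝ)) *
          ∫⁻ t in Ioi (0 : ℝ), ENNReal.ofReal (t ^ (finrank ℝ Kᗮ / 2 - 1 : ℝ)) * G s t := by
  have hinner : Measurable fun s ↦
      ∫⁻ t in Ioi (0 : ℝ), ENNReal.ofReal (t ^ (finrank ℝ Kᗮ / 2 - 1 : ℝ)) * G s t :=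
    Measurable.lintegral_prod_right' (f := fun p : ℝ × ℝ ↦
      ENNReal.ofReal (p.2 ^ (finrank ℝ Kᗮ / 2 - 1 : ℝ)) * G p.1 p.2) (by fun_prop)
  rw [lintegral_comp_orthogonalProjectionOnto K
    (F := fun a b ↦ G (‖a‖ ^ 2) (‖b‖ ^ 2)) (by fun_prop), mul_comm (ENNReal.ofReal _), mul_assoc,
    ← lintegral_comp_norm_sq hinner, ← lintegral_const_mul' _ _ ENNReal.ofReal_ne_top]
  exact lintegral_congr fun a ↦ lintegral_comp_norm_sq (by fun_prop)

theorem lintegral_comp_norm_sq_mul_rpow_orthogonalProjectionOnto (K : Submodule ℝ E)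
    [Nontrivial K] [Nontrivial Kᗮ] {g : ℝ → ℝ≥0∞} (hg : Measurable g) (a b : ℝ) :
    ∫⁻ y : E, g (‖y‖ ^ 2) * ENNReal.ofReal
        ((‖K.orthogonalProjectionOnto y‖ ^ 2) ^ a * (‖Kᗮ.orthogonalProjectionOnto y‖ ^ 2) ^ b) =
      ENNReal.ofReal (halfSphereArea (finrank ℝ K)) *
        ENNReal.ofReal (halfSphereArea (finrank ℝ Kᗮ)) *
        (lbeta (finrank ℝ K / 2 - 1 + a) (finrank ℝ Kᗮ / 2 - 1 + b) *
          ∫⁻ τ in Ioi (0 : ℝ), g τ * ENNReal.ofReal (τ ^ (finrank ℝ E / 2 - 1 + a + b))) := by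
  have hexponent : (finrank ℝ E / 2 - 1 + a + b : ℝ) =
      finrank ℝ K / 2 - 1 + a + (finrank ℝ Kᗮ / 2 - 1 + b) + 1 := by
    rw [← K.finrank_add_finrank_orthogonal]
    push_cast
    ring
  simp_rw [K.norm_sq_eq_add_norm_sq_projection]
  rw [lintegral_comp_norm_sq_orthogonalProjectionOnto K
    (G := fun s t ↦ g (s + t) * ENNReal.ofReal (s ^ a * t ^ b)) (by fun_prop), hexponent,
    ← lintegral_Ioi_lintegral_Ioi_comp_add_mul_rpow hg]
  congr 1
  refine setLIntegral_congr_fun measurableSet_Ioi fun s (hs : 0 < s) ↦ ?_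
  rw [← lintegral_const_mul' _ _ ENNReal.ofReal_ne_top]
  refine setLIntegral_congr_fun measurableSet_Ioi fun t (ht : 0 < t) ↦ ?_
  rw [mul_left_comm (ENNReal.ofReal (t ^ _)), mul_left_comm, ← ENNReal.ofReal_mul (by positivity),
    ← ENNReal.ofReal_mul (by positivity), rpow_add hs, rpow_add ht]
  ring_nf

theorem lintegral_comp_norm_sq_mul_rpow_span_singleton [Fact (finrank ℝ E = 2 + 1)] {x : E}
    (hx : x ≠ 0) {g : ℝ → ℝ≥0∞} (hg : Measurable g) (a b : ℝ) :
    ∫⁻ y : E, g (‖y‖ ^ 2) * ENNReal.ofReal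
        ((‖(ℝ ∙ x).orthogonalProjectionOnto y‖ ^ 2) ^ a *
          (‖(ℝ ∙ x)ᗮ.orthogonalProjectionOnto y‖ ^ 2) ^ b) =
      ENNReal.ofReal π * (lbeta (a - 1 / 2) b *
        ∫⁻ τ in Ioi (0 : ℝ), g τ * ENNReal.ofReal (τ ^ (a + b + 1 / 2))) := by
  have hline : finrank ℝ (ℝ ∙ x) = 1 := finrank_span_singleton hx
  have hplane : finrank ℝ (ℝ ∙ x)ᗮ = 2 := Submodule.finrank_orthogonal_span_singleton hx
  have : Nontrivial (ℝ ∙ x) := nontrivial_of_finrank_pos (R := ℝ) (by lia)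
  have : Nontrivial (ℝ ∙ x)ᗮ := nontrivial_of_finrank_pos (R := ℝ) (by lia)
  rw [lintegral_comp_norm_sq_mul_rpow_orthogonalProjectionOnto (ℝ ∙ x) hg, hline, hplane,
    halfSphereArea_one, halfSphereArea_two, Fact.out (p := finrank ℝ E = 2 + 1),
    ENNReal.ofReal_one, one_mul]
  have hp : ((1 : ℕ) : ℝ) / 2 - 1 + a = a - 1 / 2 := by
    push_cast
    ring
  have hq : ((2 : ℕ) : ℝ) / 2 - 1 + b = b := by simp
  have hr : ((2 + 1 : ℕ) : ℝ) / 2 - 1 + a + b = a + b + 1 / 2 := by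
    push_cast
    ring
  rw [hp, hq, hr]

end InnerProductSpace

theorem norm_mul_norm_orthogonalProjectionOnto_span_singleton {E : Type*} [NormedAddCommGroup E]
    [InnerProductSpace ℝ E] (x y : E) :
    ‖x‖ * ‖(ℝ ∙ x).orthogonalProjectionOnto y‖ = |⟪x, y⟫| := by
  obtain rfl | hx := eq_or_ne x 0
  · simp
  have hx' := norm_ne_zero_iff.2 hx
  rw [Submodule.coe_norm, Submodule.coe_orthogonalProjectionOnto_apply,
    Submodule.starProjection_singleton, norm_smul, norm_div, norm_eq_abs]
  simp only [RCLike.ofReal_real_eq_id, id, norm_pow, norm_norm]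
  field_simp

theorem norm3_eq_norm_toLp (v : Fin 3 → ℝ) : norm3 v = ‖WithLp.toLp 2 v‖ := by
  simp [norm3, EuclideanSpace.norm_eq, Fin.sum_univ_three]

theorem dot3_eq_inner_toLp (x v : Fin 3 → ℝ) :
    dot3 x v = ⟪WithLp.toLp 2 x, WithLp.toLp 2 v⟫ := by
  simp [dot3, PiLp.inner_apply, Fin.sum_univ_three, mul_comm]

theorem norm3_nonneg (v : Fin 3 → ℝ) : 0 ≤ norm3 v :=
  sqrt_nonneg _

theorem norm3_sq (v : Fin 3 → ℝ) : norm3 v ^ 2 = v 0 ^ 2 + v 1 ^ 2 + v 2 ^ 2 :=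
  sq_sqrt (by positivity)

theorem norm3_cross3_sq (x v : Fin 3 → ℝ) :
    norm3 (cross3 x v) ^ 2 = norm3 x ^ 2 * norm3 v ^ 2 - dot3 x v ^ 2 := by
  simp only [norm3_sq, cross3, dot3, Matrix.cons_val]
  ring

theorem dot3_sq (x v : Fin 3 → ℝ) :
    dot3 x v ^ 2 = norm3 x ^ 2 *
      ‖(ℝ ∙ WithLp.toLp 2 x).orthogonalProjectionOnto (WithLp.toLp 2 v)‖ ^ 2 := by
  rw [norm3_eq_norm_toLp, ← mul_pow, norm_mul_norm_orthogonalProjectionOnto_span_singleton, sq_abs,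
    dot3_eq_inner_toLp]

theorem norm3_cross3 (x v : Fin 3 → ℝ) :
    norm3 (cross3 x v) =
      norm3 x * ‖(ℝ ∙ WithLp.toLp 2 x)ᗮ.orthogonalProjectionOnto (WithLp.toLp 2 v)‖ := by
  have hpythagoras := (ℝ ∙ WithLp.toLp 2 x).norm_sq_eq_add_norm_sq_projection (WithLp.toLp 2 v)
  rw [← norm3_eq_norm_toLp] at hpythagoras
  rw [← pow_left_inj₀ (norm3_nonneg _) (mul_nonneg (norm3_nonneg _) (norm_nonneg _)) two_ne_zero,
    norm3_cross3_sq, dot3_sq, hpythagoras]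
  ring

theorem dot3_div_norm3_sq_mul_norm3_cross3_rpow {x : Fin 3 → ℝ} (hx : norm3 x ≠ 0) (l : ℝ)
    (v : Fin 3 → ℝ) :
    (dot3 x v / norm3 x) ^ 2 * norm3 (cross3 x v) ^ (2 * l) = norm3 x ^ (2 * l) *
      ((‖(ℝ ∙ WithLp.toLp 2 x).orthogonalProjectionOnto (WithLp.toLp 2 v)‖ ^ 2) ^ (1 : ℝ) *
        (‖(ℝ ∙ WithLp.toLp 2 x)ᗮ.orthogonalProjectionOnto (WithLp.toLp 2 v)‖ ^ 2) ^ l) := by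
  rw [div_pow, dot3_sq, mul_div_cancel_left₀ _ (pow_ne_zero 2 hx), norm3_cross3,
    mul_rpow (norm3_nonneg _) (norm_nonneg _), rpow_mul (norm_nonneg _), rpow_two, rpow_one]
  ring

theorem lintegral_comp_norm3_sq_mul_dot3_sq_mul_norm3_cross3_rpow {x : Fin 3 → ℝ}
    (hx : norm3 x ≠ 0) {g : ℝ → ℝ≥0∞} (hg : Measurable g) (l : ℝ) :
    ∫⁻ v : Fin 3 → ℝ, g (norm3 v ^ 2) *
        ENNReal.ofReal ((dot3 x v / norm3 x) ^ 2 * norm3 (cross3 x v) ^ (2 * l)) =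
      ENNReal.ofReal (norm3 x ^ (2 * l)) * (ENNReal.ofReal π * (lbeta l (1 / 2) *
        ∫⁻ τ in Ioi (0 : ℝ), g τ * ENNReal.ofReal (τ ^ (l + 3 / 2)))) := by
  have hx' : WithLp.toLp 2 x ≠ 0 := by rwa [← norm_ne_zero_iff, ← norm3_eq_norm_toLp]
  have : Fact (finrank ℝ (EuclideanSpace ℝ (Fin 3)) = 2 + 1) := ⟨finrank_euclideanSpace_fin⟩
  have hmoment := lintegral_comp_norm_sq_mul_rpow_span_singleton hx' hg 1 l
  rw [← (PiLp.volume_preserving_toLp (Fin 3)).lintegral_comp_emb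
    (MeasurableEquiv.toLp 2 _).measurableEmbedding, lbeta_comm,
    show 1 - 1 / 2 = (1 / 2 : ℝ) by norm_num, show 1 + l + 1 / 2 = l + 3 / 2 by ring] at hmoment
  simp_rw [dot3_div_norm3_sq_mul_norm3_cross3_rpow hx,
    ENNReal.ofReal_mul (rpow_nonneg (norm3_nonneg x) _), mul_left_comm (g _),
    norm3_eq_norm_toLp]
  rw [lintegral_const_mul' _ _ ENNReal.ofReal_ne_top, hmoment]

theorem lintegral_Ioi_comp_half_mul_add (φ : ℝ → ℝ≥0∞) (k u : ℝ) :
    ∫⁻ τ in Ioi (0 : ℝ), φ (1 / 2 * τ + u) * ENNReal.ofReal (τ ^ k) =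
      ENNReal.ofReal (2 ^ (k + 1)) *
        ∫⁻ E in Ioi u, φ E * ENNReal.ofReal ((E - u) ^ k) := by
  have hpreimage : (fun τ : ℝ ↦ 1 / 2 * τ + u) ⁻¹' Ioi u = Ioi 0 := by
    ext τ
    simp
  rw [setLIntegral_comp_mul_add one_half_pos.ne' u (measurableSet_Ioi (a := u)), hpreimage,
    ← mul_assoc, ← ENNReal.ofReal_mul (by positivity),
    ← lintegral_const_mul' _ _ ENNReal.ofReal_ne_top]
  refine setLIntegral_congr_fun measurableSet_Ioi fun τ (hτ : 0 < τ) ↦ ?_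
  rw [mul_left_comm, ← ENNReal.ofReal_mul (by positivity), add_sub_cancel_right,
    mul_rpow one_half_pos.le hτ.le, rpow_add_one two_ne_zero, one_div, inv_rpow zero_le_two,
    abs_of_pos (by positivity)]
  congr 2
  field_simp

theorem pressure_reduction_nonrelativistic
    (l : ℝ) (hl : -1 < l) (φ : ℝ → ℝ≥0∞) (hφ : Measurable φ)
    (x : Fin 3 → ℝ) (r : ℝ) (hr : 0 < r) (hx : norm3 x = r) (u : ℝ) :
    (∫⁻ v : Fin 3 → ℝ,
        φ (1 / 2 * norm3 v ^ 2 + u) *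
          ENNReal.ofReal ((dot3 x v / r) ^ 2 * norm3 (cross3 x v) ^ (2 * l))) =
      ENNReal.ofReal (2 ^ (l + 5 / 2) * π *
          (∫ s in (0:ℝ)..1, s ^ l * (1 - s) ^ ((1/2) : ℝ)) * r ^ (2 * l)) *
        ∫⁻ E in Ioi u, φ E * ENNReal.ofReal ((E - u) ^ (l + 3 / 2)) := by
  subst hx
  have henergy := lintegral_Ioi_comp_half_mul_add φ (l + 3 / 2) u
  rw [show l + 3 / 2 + 1 = l + 5 / 2 by ring] at henergy
  rw [lintegral_comp_norm3_sq_mul_dot3_sq_mul_norm3_cross3_rpow hr.ne'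
      (g := fun q ↦ φ (1 / 2 * q + u)) (by fun_prop), henergy,
    lbeta_eq_ofReal_integral hl (by norm_num), ENNReal.ofReal_mul' (rpow_nonneg hr.le _),
    ENNReal.ofReal_mul (by positivity), ENNReal.ofReal_mul (by positivity)]
  ring
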